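/- Let (Γ,·) be a finite group and let (D,γ) be a Γ-labelled complete digraph on |Γ|+1 vertices which contains no balanced directed cycle. Then there exists an efficient tuple in (D,γ): namely a subset X ⊆ V(D), distinct vertices u,v ∈ X, a Γ-labelling γ' of D shifting-equivalent to γ, and a subset R ⊆ R_{D,γ'}(X,u,v) such that stab_r(R) is a non-trivial subgroup of Γ and |R| ≥ |X|−1. -/

import Mathlib

/-!
Fix a root `x` and grow a set `X ∋ x`, keeping the invariant that for *every* vertex `z` outside
`X` the set `R_z` of values of `x`-`z` paths inside `X ∪ {z}` has at least `|X|` elements. This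
holds for `X = {x}`. If it survives until `|X| = |Γ|`, then `R_z = Γ` for the last vertex `z`, and
`Γ` is its own (non-trivial) stabilizer.

To enlarge `X` by `a`, append `z` to the `x`-`a` paths: the new value set at `z` contains
`R_z ∪ R_a · γ(a,z)`. So the invariant fails for `X ∪ {a}` only if `R_a · γ(a,z) = R_z` for some
`z ≠ a` outside `X` (`step_eq`). If it fails for every `a`, choose such a `z =: s(a)`. A periodic
orbit of `s` is a directed cycle through some `a` whose label product `g` satisfies `R_a · g = R_a`
(`exists_stabr_of_successor`). Since the cycle is not balanced, `g ≠ 1`, and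
`(X ∪ {a}, x, a, γ, R_a)` is efficient; no shifting is needed.
-/

/-- The cumulative product of the arc-labels of the directed cycle
`c = [v₀, v₁, …, v_{ℓ-1}]` (with closing arc `(v_{ℓ-1}, v₀)`). -/
def cycleProd {V Γ : Type} [Monoid Γ] (γ : V → V → Γ) (c : List V) : Γ :=
  ((c.zip (c.rotate 1)).map fun e => γ e.1 e.2).prod

/-- `c` is a directed cycle of the complete digraph (a list of at least two
pairwise distinct vertices) which is balanced with respect to `γ`. -/
def IsBalancedCycle {V Γ : Type} [Monoid Γ] (γ : V → V → Γ) (c : List V) : Prop :=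
  2 ≤ c.length ∧ c.Nodup ∧ cycleProd γ c = 1

/-- The cumulative product of the arc-labels along the directed path given by the
list of vertices `p` (a single-vertex path has value `1`). -/
def pathProd {V Γ : Type} [Monoid Γ] (γ : V → V → Γ) (p : List V) : Γ :=
  ((p.zip p.tail).map fun e => γ e.1 e.2).prod

/-- `R_{D,γ}(X, x, y)`: the set of `γ`-values of directed paths inside `X`
from `x` to `y`. -/
def pathVals {V Γ : Type} [Monoid Γ] (γ : V → V → Γ) (X : Set V) (x y : V) : Set Γ :=
  {g | ∃ p : List V, p ≠ [] ∧ p.Nodup ∧ (∀ w ∈ p, w ∈ X) ∧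
        p.head? = some x ∧ p.getLast? = some y ∧ pathProd γ p = g}

/-- The left stabilizer `stab_l(S) = {g : g·S = S}` of a subset `S` of a group. -/
def stabl {Γ : Type} [Group Γ] (S : Set Γ) : Set Γ :=
  {g | (fun s => g * s) '' S = S}

/-- The right stabilizer `stab_r(S) = {g : S·g = S}` of a subset `S` of a group. -/
def stabr {Γ : Type} [Group Γ] (S : Set Γ) : Set Γ :=
  {g | (fun s => s * g) '' S = S}

/-- The labelling obtained from `γ` by shifting by `g` at the vertex `v`:
labels of arcs into `v` are multiplied by `g⁻¹` on the right, labels of arcs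
out of `v` are multiplied by `g` on the left, all other labels are unchanged. -/
def shiftLab {V Γ : Type} [Group Γ] [DecidableEq V] (γ : V → V → Γ) (g : Γ) (v : V) :
    V → V → Γ :=
  fun a b =>
    if a = b then γ a b
    else if b = v then γ a b * g⁻¹
    else if a = v then g * γ a b
    else γ a b

/-- Two labellings are shifting-equivalent if one is obtained from the other by a
finite sequence of shifting operations. -/
def ShiftEquiv {V Γ : Type} [Group Γ] [DecidableEq V] (γ γ' : V → V → Γ) : Prop :=
  Relation.ReflTransGen (fun α β => ∃ g v, β = shiftLab α g v) γ γ'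

/-- `(X, u, v, γ', R)` is an efficient tuple in `(D, γ)`: `u, v ∈ X` are distinct,
`γ'` is shifting-equivalent to `γ`, and `R ⊆ R_{D,γ'}(X,u,v)` has a non-trivial
right stabilizer and satisfies `|R| ≥ |X| - 1`. -/
def IsEfficientTuple {V Γ : Type} [Group Γ] [DecidableEq V] (γ : V → V → Γ)
    (X : Set V) (u v : V) (γ' : V → V → Γ) (R : Set Γ) : Prop :=
  u ∈ X ∧ v ∈ X ∧ u ≠ v ∧ ShiftEquiv γ γ' ∧ R ⊆ pathVals γ' X u v ∧
    (∃ g ∈ stabr R, g ≠ 1) ∧ X.ncard ≤ R.ncard + 1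

/-- A super-efficient tuple is an efficient tuple with `|R| ≥ |X|`. -/
def IsSuperEfficientTuple {V Γ : Type} [Group Γ] [DecidableEq V] (γ : V → V → Γ)
    (X : Set V) (u v : V) (γ' : V → V → Γ) (R : Set Γ) : Prop :=
  IsEfficientTuple γ X u v γ' R ∧ X.ncard ≤ R.ncard

lemma pathProd_concat {V Γ : Type} [Monoid Γ] (γ : V → V → Γ) (p : List V) (a z : V)
    (h : p.getLast? = some a) : pathProd γ (p ++ [z]) = pathProd γ p * γ a z := by
  induction p with
  | nil => simp at h
  | cons b l ih =>
    cases l with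
    | nil =>
      simp at h
      simp [pathProd, h]
    | cons c l =>
      have := ih (by simpa using h)
      simp [pathProd] at this ⊢
      rw [this, mul_assoc]

lemma pathVals_mono {V Γ : Type} [Monoid Γ] (γ : V → V → Γ) {X Y : Set V} (h : X ⊆ Y) (x y : V) :
    pathVals γ X x y ⊆ pathVals γ Y x y := by
  rintro g ⟨p, h0, h1, h2, h3⟩
  exact ⟨p, h0, h1, fun w hw => h (h2 w hw), h3⟩

lemma pathVals_concat {V Γ : Type} [Monoid Γ] (γ : V → V → Γ) {X : Set V} {x a z : V}
    (hz : z ∉ X) :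
    (fun r => r * γ a z) '' pathVals γ X x a ⊆ pathVals γ (insert z X) x z := by
  rintro _ ⟨_, ⟨p, h0, h1, h2, h3, h4, rfl⟩, rfl⟩
  refine ⟨p ++ [z], by simp, ?_, ?_, ?_, by simp, pathProd_concat γ p a z h4⟩
  · rw [List.nodup_append]
    refine ⟨h1, by simp, ?_⟩
    intro w hw b hb
    rw [List.mem_singleton] at hb
    rintro rfl
    exact hz (hb ▸ h2 _ hw)
  · intro w hw
    rcases List.mem_append.1 hw with hw | hw
    · exact Or.inr (h2 w hw)
    · exact Or.inl (List.mem_singleton.1 hw)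
  · rw [List.head?_append, h3]; rfl

/-- If all value sets have at least `k` elements before `a` is added, but the one at `z` has at most
`k` elements afterwards, then appending the arc `(a, z)` maps the value set at `a` onto the one
at `z`. -/
lemma step_eq {V Γ : Type} [Group Γ] [Finite Γ] (γ : V → V → Γ) {X : Set V} {x a z : V} {k : ℕ}
    (hz : z ∉ insert a X)
    (ha' : k ≤ (pathVals γ (insert a X) x a).ncard)
    (hz' : k ≤ (pathVals γ (insert z X) x z).ncard)
    (hlt : (pathVals γ (insert z (insert a X)) x z).ncard ≤ k) :
    (fun r => r * γ a z) '' pathVals γ (insert a X) x a = pathVals γ (insert z X) x z := by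
  have h1 := pathVals_concat γ (x := x) (a := a) hz
  have h2 : pathVals γ (insert z X) x z ⊆ pathVals γ (insert z (insert a X)) x z :=
    pathVals_mono γ (Set.insert_subset_insert (Set.subset_insert a X)) x z
  have hc : ((fun r => r * γ a z) '' pathVals γ (insert a X) x a).ncard
      = (pathVals γ (insert a X) x a).ncard :=
    Set.ncard_image_of_injective _ (mul_left_injective _)
  rw [Set.eq_of_subset_of_ncard_le h1 (by omega), Set.eq_of_subset_of_ncard_le h2 (by omega)]

lemma exists_periodic {V : Type} [Finite V] (s : V → V) (z : V) :
    ∃ i, s^[i] z ∈ Function.periodicPts s := by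
  obtain ⟨i, j, hij, h⟩ :=
    Finite.exists_ne_map_eq_of_infinite (fun n : ℕ => s^[n] z)
  wlog hlt : i < j generalizing i j
  · exact this j i hij.symm h.symm (by omega)
  refine ⟨i, Function.mk_mem_periodicPts (n := j - i) (by omega) ?_⟩
  change s^[j - i] (s^[i] z) = s^[i] z
  rw [← Function.iterate_add_apply, Nat.sub_add_cancel hlt.le]
  exact h.symm

lemma cycleProd_orbit {V Γ : Type} [Monoid Γ] (γ : V → V → Γ) (s : V → V) (p : V) :
    cycleProd γ ((List.range (Function.minimalPeriod s p)).map fun i => s^[i] p)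
      = ((List.range (Function.minimalPeriod s p)).map
          fun i => γ (s^[i] p) (s^[i + 1] p)).prod := by
  have hrot : ((List.range (Function.minimalPeriod s p)).map fun i => s^[i] p).rotate 1
      = (List.range (Function.minimalPeriod s p)).map fun i => s^[i + 1] p := by
    apply List.ext_getElem
    · simp
    · intro i h1 h2
      simp only [List.getElem_rotate, List.getElem_map, List.getElem_range, List.length_map,
        List.length_range]
      exact Function.iterate_mod_minimalPeriod_eq
  unfold cycleProd
  rw [hrot, List.zip_map', List.map_map]
  rfl

/-- If right multiplication by `γ(a, s a)` carries `R a` to `R (s a)` for a fixed-point-free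
self-map `s` of a non-empty set `Z`, then following a periodic orbit of `s` gives a non-trivial
element of the stabilizer of some `R a`, because the orbit is an unbalanced cycle. -/
lemma exists_stabr_of_successor {V Γ : Type} [Group Γ] [Finite V] (γ : V → V → Γ)
    (hbal : ¬ ∃ c : List V, IsBalancedCycle γ c) (Z : Set V) (hZ : Z.Nonempty)
    (s : V → V) (R : V → Set Γ)
    (hs : ∀ a ∈ Z, s a ∈ Z ∧ s a ≠ a ∧ (fun r => r * γ a (s a)) '' R a = R (s a)) :
    ∃ a ∈ Z, ∃ g ∈ stabr (R a), g ≠ 1 := by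
  obtain ⟨z, hz⟩ := hZ
  have hit : ∀ w ∈ Z, ∀ n : ℕ, s^[n] w ∈ Z := by
    intro w hw n
    induction n with
    | zero => exact hw
    | succ n ih => rw [Function.iterate_succ_apply']; exact (hs _ ih).1
  obtain ⟨i, hp⟩ := exists_periodic s z
  have hpZ := hit z hz i
  generalize s^[i] z = p at hp hpZ
  have htransport : ∀ n : ℕ,
      (fun r => r * ((List.range n).map fun i => γ (s^[i] p) (s^[i + 1] p)).prod) '' R p
        = R (s^[n] p) := by
    intro n
    induction n with
    | zero => simp
    | succ n ih =>
      rw [Function.iterate_succ_apply', ← (hs _ (hit p hpZ n)).2.2, ← ih, Set.image_image]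
      simp only [List.range_succ, List.map_append, List.prod_append, List.map_cons, List.map_nil,
        List.prod_singleton, Function.iterate_succ_apply', mul_assoc]
  refine ⟨p, hpZ, cycleProd γ ((List.range (Function.minimalPeriod s p)).map fun i => s^[i] p),
    ?_, ?_⟩
  · have := htransport (Function.minimalPeriod s p)
    rw [Function.iterate_minimalPeriod] at this
    rw [cycleProd_orbit]
    exact this
  · intro h1
    refine hbal ⟨_, ?_, ?_, h1⟩
    · have h0 := Function.minimalPeriod_pos_of_mem_periodicPts hp
      have hne : Function.minimalPeriod s p ≠ 1 := fun h =>
        (hs p hpZ).2.1 (Function.minimalPeriod_eq_one_iff_isFixedPt.1 h)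
      simp only [List.length_map, List.length_range]
      omega
    · refine List.Nodup.map_on ?_ List.nodup_range
      intro i hi j hj hij
      exact Function.iterate_injOn_Iio_minimalPeriod (List.mem_range.1 hi) (List.mem_range.1 hj) hij

/-- If `Γ` is a finite group and `(D, γ)` is a `Γ`-labelled complete
digraph on `|Γ| + 1` vertices with no balanced cycle, then there exists an efficient
tuple in `(D, γ)`. -/
theorem efficient_tuple_exists {Γ V : Type} [Group Γ] [Fintype Γ]
    [Fintype V] [DecidableEq V]
    (hV : Fintype.card V = Fintype.card Γ + 1)
    (γ : V → V → Γ)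
    (hbal : ¬ ∃ c : List V, IsBalancedCycle γ c) :
    ∃ (X : Set V) (u v : V) (γ' : V → V → Γ) (R : Set Γ),
      IsEfficientTuple γ X u v γ' R := by
  classical
  by_contra hno
  have hno' : ∀ (X : Set V) (x z : V), x ∈ X → z ∉ X →
      X.ncard ≤ (pathVals γ (insert z X) x z).ncard →
      ¬ ∃ g ∈ stabr (pathVals γ (insert z X) x z), g ≠ 1 := by
    intro X x z hx hz hcard hstab
    refine hno ⟨insert z X, x, z, γ, _, Or.inr hx, Or.inl rfl, ?_, Relation.ReflTransGen.refl,
      subset_rfl, hstab, ?_⟩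
    · rintro rfl; exact hz hx
    · have := Set.ncard_insert_le z X
      omega
  have hΓpos : 0 < Fintype.card Γ := Fintype.card_pos
  have hVcard : Nat.card V = Fintype.card Γ + 1 := by rw [Nat.card_eq_fintype_card, hV]
  obtain ⟨x, y, hxy⟩ : ∃ x y : V, x ≠ y := Fintype.exists_pair_of_one_lt_card (by omega)
  -- `Γ` is non-trivial: the label of the 2-cycle on `x, y` is not `1`.
  have hΓ : ∃ g : Γ, g ≠ 1 := by
    by_contra! h
    exact hbal ⟨[x, y], by simp, by simp [hxy], h _⟩
  have hout : ∀ X : Set V, X.ncard ≤ Fintype.card Γ → ∃ z, z ∉ X := by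
    intro X hX
    by_contra! h
    rw [Set.eq_univ_of_forall h, Set.ncard_univ] at hX
    omega
  have grow : ∀ k : ℕ, 1 ≤ k → k ≤ Fintype.card Γ → ∃ X : Set V, X.ncard = k ∧ x ∈ X ∧
      ∀ z ∉ X, k ≤ (pathVals γ (insert z X) x z).ncard := by
    intro k hk
    induction k, hk using Nat.le_induction with
    | base =>
      intro _
      refine ⟨{x}, by simp, rfl, fun z hz => ?_⟩
      rw [Nat.one_le_iff_ne_zero, ← Nat.pos_iff_ne_zero, Set.ncard_pos]
      exact ⟨_, [x, z], by simp, by simpa [eq_comm] using hz, by simp, rfl, rfl, rfl⟩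
    | succ k hk ih =>
      intro hkΓ
      obtain ⟨X, hXk, hxX, hX⟩ := ih (by omega)
      by_contra hfail
      have hsucc : ∀ a, ∃ z, a ∉ X → z ∉ insert a X ∧
          (pathVals γ (insert z (insert a X)) x z).ncard ≤ k := by
        intro a
        by_cases ha : a ∈ X
        · exact ⟨a, fun h => absurd ha h⟩
        by_contra! h
        refine hfail ⟨insert a X, ?_, Or.inr hxX, fun z hz => (h z).2 hz⟩
        rw [Set.ncard_insert_of_notMem ha, hXk]
      choose s hs using hsucc
      obtain ⟨a, haX, hg⟩ := exists_stabr_of_successor γ hbal Xᶜ (hout X (by omega)) s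
        (fun a => pathVals γ (insert a X) x a) (by
          intro a ha
          obtain ⟨h1, h2⟩ := hs a ha
          have h3 : s a ∉ X := fun h => h1 (Or.inr h)
          exact ⟨h3, fun h => h1 (Or.inl h), step_eq γ h1 (hX a ha) (hX _ h3) h2⟩)
      exact hno' X x a hxX haX (hXk ▸ hX a haX) hg
  obtain ⟨X, hXk, hxX, hX⟩ := grow _ hΓpos le_rfl
  obtain ⟨z, hz⟩ := hout X hXk.le
  have huniv : pathVals γ (insert z X) x z = Set.univ :=
    Set.eq_of_subset_of_ncard_le (Set.subset_univ _)
      (by rw [Set.ncard_univ, Nat.card_eq_fintype_card]; exact hX z hz)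
  obtain ⟨g, hg⟩ := hΓ
  refine hno' X x z hxX hz (hXk ▸ hX z hz) ⟨g, ?_, hg⟩
  rw [huniv]
  exact Set.image_univ_of_surjective (mul_right_surjective g)
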